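/- Stationary super-solution family: for γ ≥ 0 define S_γ(x) := n̂₀(x) + γ m(x), where n̂₀(x) = x²/(eˣ − 1) and m(x) = x² eˣ/(eˣ − 1)². Then for every x > 0 the flux of S_γ satisfies J(x, S_γ) = γ² m(x)² ≥ 0, and m is nonincreasing on (0,∞), so ∂ₓ J(x, S_γ) = 2γ² m(x) m′(x) ≤ 0 for all x > 0. Hence S_γ is a stationary super-solution of the Kompaneets equation. -/

import Mathlib

open MeasureTheory Filter Set Real Topology

/-- The Kompaneets photon flux `J(x,u) = x² u'(x) + (x² - 2x) u(x) + u(x)²`. -/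
noncomputable def kompFlux (u : ℝ → ℝ) (x : ℝ) : ℝ :=
  x ^ 2 * deriv u x + (x ^ 2 - 2 * x) * u x + u x ^ 2

/-- The auxiliary profile `m(x) = x² eˣ / (eˣ - 1)²`. -/
noncomputable def mAux (x : ℝ) : ℝ := x ^ 2 * Real.exp x / (Real.exp x - 1) ^ 2

/-- The stationary super-solution family `S_γ = n̂₀ + γ m`. -/
noncomputable def Sgam (γ x : ℝ) : ℝ := x ^ 2 / (Real.exp x - 1) + γ * mAux x

/-!
Every Bose–Einstein profile `x² / (e^(x + μ) - 1)` has zero flux. Differentiating in `μ` at `0`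
shows that `m`, which is minus that derivative, is annihilated by the linearisation of `J(x, ·)` at
the Planck profile `n̂₀`. As `J(x, ·)` is quadratic with quadratic part `u²`, only `γ² m²` survives
in `J(x, n̂₀ + γ m)`. The logarithmic derivative of `m` is `2 / x - coth (x / 2)`, hence nonpositive
on `(0, ∞)`.
-/

lemma exp_sub_one_ne_zero {x : ℝ} (hx : x ≠ 0) : exp x - 1 ≠ 0 :=
  sub_ne_zero.mpr ((exp_eq_one_iff x).not.mpr hx)

lemma two_div_le_one_add_two_div_exp_sub_one {x : ℝ} (hx : 0 < x) :
    2 / x ≤ 1 + 2 / (exp x - 1) := by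
  have hE : 0 < exp x - 1 := sub_pos.mpr (one_lt_exp_iff.mpr hx)
  have hlog : 2 * (exp x - 1) / (exp x - 1 + 2) ≤ x := by
    simpa only [add_sub_cancel, log_exp] using le_log_one_add_of_nonneg hE.le
  rw [div_le_iff₀ (by positivity)] at hlog
  rw [one_add_div hE.ne', div_le_div_iff₀ hx hE]
  linarith

lemma le_liminf_atTop_of_antitoneOn_Ioi {α β : Type*} [LinearOrder α] [NoMaxOrder α]
    [ConditionallyCompleteLinearOrder β] {f : α → β} {a : α} {c : β}
    (hf : AntitoneOn f (Ioi a)) (hc : ∀ x ∈ Ioi a, c ≤ f x) : c ≤ liminf f atTop := by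
  obtain ⟨b, hab⟩ := exists_gt a
  have : Nonempty α := ⟨a⟩
  have hbdd : IsBoundedUnder (· ≤ ·) atTop f := isBoundedUnder_of_eventually_le <|
    (eventually_ge_atTop b).mono fun x hbx => hf hab (hab.trans_le hbx) hbx
  exact le_liminf_of_le hbdd.isCoboundedUnder_ge ((eventually_gt_atTop a).mono hc)

/-- The linearisation at `u`, in the direction `v`, of the Kompaneets flux `u ↦ J(x,u)`. -/
noncomputable def kompFluxLin (u v : ℝ → ℝ) (x : ℝ) : ℝ :=
  x ^ 2 * deriv v x + (x ^ 2 - 2 * x) * v x + 2 * u x * v x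

lemma kompFlux_add_const_mul {u v : ℝ → ℝ} {x : ℝ} (hu : DifferentiableAt ℝ u x)
    (hv : DifferentiableAt ℝ v x) (c : ℝ) :
    kompFlux (fun y => u y + c * v y) x =
      kompFlux u x + c * kompFluxLin u v x + c ^ 2 * v x ^ 2 := by
  have hderiv : deriv (fun y => u y + c * v y) x = deriv u x + c * deriv v x :=
    (hu.hasDerivAt.add (hv.hasDerivAt.const_mul c)).deriv
  simp only [kompFlux, kompFluxLin, hderiv]
  ring

/-- The Planck profile `n̂₀(x) = x² / (eˣ - 1)`, the zero-flux equilibrium about which the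
super-solutions are built. -/
noncomputable def planck (x : ℝ) : ℝ := x ^ 2 / (exp x - 1)

lemma hasDerivAt_planck {x : ℝ} (hx : x ≠ 0) :
    HasDerivAt planck ((2 / x - 1 - 1 / (exp x - 1)) * planck x) x := by
  have hE := exp_sub_one_ne_zero hx
  have h := (hasDerivAt_pow 2 x).fun_div ((Real.hasDerivAt_exp x).sub_const 1) hE
  refine h.congr_deriv ?_
  unfold planck
  field_simp
  push_cast
  ring

lemma kompFlux_planck {x : ℝ} (hx : x ≠ 0) : kompFlux planck x = 0 := by
  have hE := exp_sub_one_ne_zero hx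
  rw [kompFlux, (hasDerivAt_planck hx).deriv]
  unfold planck
  field_simp
  ring

lemma mAux_nonneg (x : ℝ) : 0 ≤ mAux x := by
  unfold mAux
  positivity

lemma hasDerivAt_mAux {x : ℝ} (hx : x ≠ 0) :
    HasDerivAt mAux ((2 / x - 1 - 2 / (exp x - 1)) * mAux x) x := by
  have hE := exp_sub_one_ne_zero hx
  have h := ((hasDerivAt_pow 2 x).fun_mul (Real.hasDerivAt_exp x)).fun_div
    (((Real.hasDerivAt_exp x).sub_const 1).fun_pow 2) (pow_ne_zero 2 hE)
  refine h.congr_deriv ?_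
  unfold mAux
  field_simp
  push_cast
  ring

lemma deriv_mAux_nonpos {x : ℝ} (hx : 0 < x) : deriv mAux x ≤ 0 := by
  rw [(hasDerivAt_mAux hx.ne').deriv]
  refine mul_nonpos_of_nonpos_of_nonneg ?_ (mAux_nonneg x)
  linarith [two_div_le_one_add_two_div_exp_sub_one hx]

lemma antitoneOn_mAux : AntitoneOn mAux (Ioi 0) := by
  have hdiff {x : ℝ} (hx : x ∈ Ioi 0) : DifferentiableAt ℝ mAux x :=
    (hasDerivAt_mAux (ne_of_gt hx)).differentiableAt
  refine antitoneOn_of_deriv_nonpos (convex_Ioi 0)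
    (fun x hx => (hdiff hx).continuousAt.continuousWithinAt) ?_ ?_ <;> rw [interior_Ioi]
  · exact fun x hx => (hdiff hx).differentiableWithinAt
  · exact fun x hx => deriv_mAux_nonpos hx

lemma kompFluxLin_planck_mAux {x : ℝ} (hx : x ≠ 0) : kompFluxLin planck mAux x = 0 := by
  have hE := exp_sub_one_ne_zero hx
  rw [kompFluxLin, (hasDerivAt_mAux hx).deriv, planck]
  field_simp
  ring

lemma kompFlux_Sgam (γ : ℝ) {x : ℝ} (hx : x ≠ 0) :
    kompFlux (Sgam γ) x = γ ^ 2 * mAux x ^ 2 :=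
  calc kompFlux (Sgam γ) x
      = kompFlux planck x + γ * kompFluxLin planck mAux x + γ ^ 2 * mAux x ^ 2 :=
        kompFlux_add_const_mul (hasDerivAt_planck hx).differentiableAt
          (hasDerivAt_mAux hx).differentiableAt γ
    _ = γ ^ 2 * mAux x ^ 2 := by
        rw [kompFlux_planck hx, kompFluxLin_planck_mAux hx, mul_zero, zero_add, zero_add]

lemma kompFlux_Sgam_nonneg (γ : ℝ) {x : ℝ} (hx : x ≠ 0) : 0 ≤ kompFlux (Sgam γ) x := by
  rw [kompFlux_Sgam γ hx]
  positivity

lemma antitoneOn_kompFlux_Sgam (γ : ℝ) : AntitoneOn (kompFlux (Sgam γ)) (Ioi 0) := by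
  intro x hx y hy hxy
  have hm : mAux y ≤ mAux x := antitoneOn_mAux hx hy hxy
  have hm_nonneg : 0 ≤ mAux y := mAux_nonneg y
  rw [kompFlux_Sgam γ (ne_of_gt hx), kompFlux_Sgam γ (ne_of_gt hy)]
  gcongr

lemma deriv_kompFlux_Sgam (γ : ℝ) {x : ℝ} (hx : x ≠ 0) :
    deriv (kompFlux (Sgam γ)) x = 2 * γ ^ 2 * mAux x * deriv mAux x := by
  have hflux : kompFlux (Sgam γ) =ᶠ[𝓝 x] fun y => γ ^ 2 * mAux y ^ 2 :=
    (eventually_ne_nhds hx).mono fun _ hy => kompFlux_Sgam γ hy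
  have hm : HasDerivAt mAux (deriv mAux x) x := (hasDerivAt_mAux hx).differentiableAt.hasDerivAt
  rw [hflux.deriv_eq, ((hm.fun_pow 2).const_mul (γ ^ 2)).deriv]
  push_cast
  ring

lemma deriv_kompFlux_Sgam_nonpos (γ : ℝ) {x : ℝ} (hx : 0 < x) :
    deriv (kompFlux (Sgam γ)) x ≤ 0 := by
  rw [deriv_kompFlux_Sgam γ hx.ne']
  exact mul_nonpos_of_nonneg_of_nonpos (mul_nonneg (by positivity) (mAux_nonneg x))
    (deriv_mAux_nonpos hx)

theorem stationary_supersolution_family_general (γ : ℝ) :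
    (∀ x : ℝ, 0 < x →
      kompFlux (Sgam γ) x = γ ^ 2 * mAux x ^ 2 ∧ 0 ≤ kompFlux (Sgam γ) x) ∧
    AntitoneOn mAux (Set.Ioi (0:ℝ)) ∧
    (∀ x : ℝ, 0 < x →
      deriv (fun y => kompFlux (Sgam γ) y) x = 2 * γ ^ 2 * mAux x * deriv mAux x ∧
      deriv (fun y => kompFlux (Sgam γ) y) x ≤ 0) ∧
    0 ≤ Filter.liminf (fun x => kompFlux (Sgam γ) x) Filter.atTop :=
  ⟨fun _ hx => ⟨kompFlux_Sgam γ hx.ne', kompFlux_Sgam_nonneg γ hx.ne'⟩,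
    antitoneOn_mAux,
    fun _ hx => ⟨deriv_kompFlux_Sgam γ hx.ne', deriv_kompFlux_Sgam_nonpos γ hx⟩,
    le_liminf_atTop_of_antitoneOn_Ioi (antitoneOn_kompFlux_Sgam γ)
      fun _ hx => kompFlux_Sgam_nonneg γ (ne_of_gt hx)⟩

theorem stationary_supersolution_family (γ : ℝ) (hγ : 0 ≤ γ) :
    (∀ x : ℝ, 0 < x →
      kompFlux (Sgam γ) x = γ ^ 2 * mAux x ^ 2 ∧ 0 ≤ kompFlux (Sgam γ) x) ∧
    AntitoneOn mAux (Set.Ioi (0:ℝ)) ∧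
    (∀ x : ℝ, 0 < x →
      deriv (fun y => kompFlux (Sgam γ) y) x = 2 * γ ^ 2 * mAux x * deriv mAux x ∧
      deriv (fun y => kompFlux (Sgam γ) y) x ≤ 0) ∧
    0 ≤ Filter.liminf (fun x => kompFlux (Sgam γ) x) Filter.atTop :=
  stationary_supersolution_family_general γ
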